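/- Let p be an odd prime and let n be a positive even integer with (p−1) ∤ n. Then 2·Σ_{k=1}^n binom(pn−1, pk−1)·(−1)^k / ((−p)^{⌊(n−2)/(p−1)⌋}·p^{n+1}·n) = F_p(pn,0)/(pn), and F_p(pn,0)/(pn) ≡ (n_*!/(n_*+1))·B_{p−1−n_*} (mod p). -/

import Mathlib

open Finset

/-- `x ≡ y (mod p^c)` for rationals: `x = y` or the `p`-adic valuation of `x - y`
is at least `c`. -/
def modCong (p : ℕ) (c : ℤ) (x y : ℚ) : Prop :=
  x = y ∨ c ≤ padicValRat p (x - y)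

/-- `C_p(n,r) = ∑_{0 ≤ k ≤ n, k ≡ r (mod p)} (-1)^k * binom(n,k)`. -/
def Cp (p n : ℕ) (r : ℤ) : ℚ :=
  ∑ k ∈ range (n+1), if ((k : ℤ) - r) % p = 0 then (-1 : ℚ)^k * (n.choose k) else 0

/-- The Fleck quotient `F_p(n,r) = (-p)^{-⌊(n-1)/(p-1)⌋} C_p(n,r) + [n = 0]`. -/
noncomputable def Fp (p n : ℕ) (r : ℤ) : ℚ :=
  (-(p:ℚ)) ^ (-(Int.fdiv ((n:ℤ) - 1) ((p:ℤ) - 1))) * Cp p n r + (if n = 0 then 1 else 0)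

/-- `n_*`: the unique integer in `{1,…,p-1}` with `n_* ≡ n (mod p-1)`. -/
def nLow (p n : ℕ) : ℕ := ((((n:ℤ) - 1) % ((p:ℤ) - 1)) + 1).toNat

open Polynomial in
/-- The sum of the coefficients of a polynomial at exponents divisible by `p`. -/
noncomputable def residueSum (p : ℕ) : ℤ[X] →ₗ[ℤ] ℤ :=
  Polynomial.lsum fun j => if p ∣ j then LinearMap.id else 0

open Polynomial in
/-- The `K`-th power moment `∑ j, a_j * j ^ K` of a polynomial `∑ j, a_j X ^ j`. -/
noncomputable def powerMoment (K : ℕ) : ℤ[X] →ₗ[ℤ] ℤ :=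
  Polynomial.lsum fun j => ((j : ℤ) ^ K) • (LinearMap.id : ℤ →ₗ[ℤ] ℤ)

section ResidueSum

open Polynomial

lemma residueSum_monomial (p j : ℕ) (a : ℤ) :
    residueSum p (monomial j a) = if p ∣ j then a else 0 := by
  by_cases h : p ∣ j <;> simp [residueSum, Polynomial.lsum_apply, h]

lemma powerMoment_monomial (K j : ℕ) (a : ℤ) :
    powerMoment K (monomial j a) = (j : ℤ) ^ K * a := by
  rw [powerMoment, Polynomial.lsum_apply, sum_monomial_index _ _ (by simp), LinearMap.smul_apply,
    LinearMap.id_apply, smul_eq_mul]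

lemma residueSum_mul_X_pow (p k : ℕ) (f : ℤ[X]) :
    residueSum p (f * X ^ (p * k)) = residueSum p f := by
  induction f using Polynomial.induction_on' with
  | add f g hf hg => rw [add_mul, map_add, map_add, hf, hg]
  | monomial j a =>
    rw [X_pow_eq_monomial, monomial_mul_monomial, residueSum_monomial, residueSum_monomial, mul_one]
    simp only [Nat.dvd_add_left (Dvd.intro k rfl : p ∣ p * k)]

lemma residueSum_mul_expand (p : ℕ) (f q : ℤ[X]) :
    residueSum p (f * expand ℤ p q) = q.eval 1 * residueSum p f := by
  induction q using Polynomial.induction_on' with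
  | add q r hq hr => rw [map_add, mul_add, map_add, hq, hr, eval_add, add_mul]
  | monomial j a =>
    rw [expand_monomial, ← C_mul_X_pow_eq_monomial, ← mul_assoc, mul_comm j p, residueSum_mul_X_pow,
      mul_comm f, ← smul_eq_C_mul, map_smul]
    simp

lemma residueSum_expand {p g : ℕ} (h : p.Coprime g) (f : ℤ[X]) :
    residueSum p (expand ℤ g f) = residueSum p f := by
  induction f using Polynomial.induction_on' with
  | add f q hf hq => rw [map_add, map_add, map_add, hf, hq]
  | monomial j a =>
    rw [expand_monomial, residueSum_monomial, residueSum_monomial]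
    simp only [h.dvd_mul_right]

lemma residueSum_mul_geom_sum {p : ℕ} (hp : 0 < p) (f : ℤ[X]) :
    residueSum p (f * ∑ i ∈ range p, X ^ i) = f.eval 1 := by
  induction f using Polynomial.induction_on' with
  | add f q hf hq => rw [add_mul, map_add, hf, hq, eval_add]
  | monomial j a =>
    induction j with
    | zero =>
      rw [mul_sum, map_sum]
      simp only [X_pow_eq_monomial, monomial_mul_monomial, residueSum_monomial, zero_add, mul_one]
      rw [Finset.sum_eq_single_of_mem 0 (by simpa using hp)]
      · simp
      · intro b hb hb0
        exact if_neg fun hd => hb0 (Nat.eq_zero_of_dvd_of_lt hd (by simpa using hb))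
    | succ j ih =>
      have key : monomial (j + 1) a * ∑ i ∈ range p, (X : ℤ[X]) ^ i
          = monomial j a * ∑ i ∈ range p, X ^ i + (monomial j a * X ^ (p * 1) - monomial j a) := by
        have := mul_geom_sum (X : ℤ[X]) p
        rw [← monomial_mul_X]
        linear_combination monomial j a * this
      rw [key, map_add, ih, map_sub, residueSum_mul_X_pow]
      simp

lemma one_sub_X_pow_eq_sum_monomial (m : ℕ) : (1 - X : ℤ[X]) ^ m =
    ∑ k ∈ range (m + 1), monomial k ((-1 : ℤ) ^ k * (m.choose k)) := by
  rw [sub_eq_neg_add, add_pow]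
  refine Finset.sum_congr rfl fun k _ => ?_
  rw [← C_mul_X_pow_eq_monomial, neg_pow]
  simp
  ring

lemma residueSum_one_sub_X_pow_eq_sum (p m : ℕ) : residueSum p ((1 - X) ^ m) =
    ∑ k ∈ range (m + 1), if p ∣ k then (-1 : ℤ) ^ k * (m.choose k) else 0 := by
  rw [one_sub_X_pow_eq_sum_monomial, map_sum]
  exact Finset.sum_congr rfl fun k _ => residueSum_monomial p k _

lemma C_dvd_iff_map_eq_zero {p : ℕ} (f : ℤ[X]) :
    C (p : ℤ) ∣ f ↔ f.map (Int.castRingHom (ZMod p)) = 0 := by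
  rw [C_dvd_iff_dvd_coeff, Polynomial.ext_iff]
  simp [ZMod.intCast_zmod_eq_zero_iff_dvd]

lemma exists_one_sub_X_pow_eq {p : ℕ} (hp : p.Prime) :
    ∃ G : ℤ[X], (1 - X) ^ (p - 1) = ∑ i ∈ range p, X ^ i - C (p : ℤ) * G ∧ G.eval 1 = 1 := by
  have := Fact.mk hp
  have hdvd : C (p : ℤ) ∣ ∑ i ∈ range p, (X : ℤ[X]) ^ i - (1 - X) ^ (p - 1) := by
    rw [C_dvd_iff_map_eq_zero]
    have h1 : (1 - X : (ZMod p)[X]) ≠ 0 := by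
      intro h
      simpa using congrArg (eval 0) h
    apply mul_left_cancel₀ h1
    have h2 : (1 - X : (ZMod p)[X]) * (1 - X) ^ (p - 1) = 1 - X ^ p := by
      rw [mul_pow_sub_one hp.ne_zero, sub_pow_char, one_pow]
    simp [Polynomial.map_sum, mul_sub, h2, mul_neg_geom_sum]
  obtain ⟨G, hG⟩ := hdvd
  refine ⟨G, by rw [← hG]; ring, ?_⟩
  have h1 := congrArg (eval 1) hG
  have hp1 : p - 1 ≠ 0 := by have := hp.two_le; omega
  simp [eval_finsetSum, hp1] at h1
  exact (mul_left_cancel₀ (by exact_mod_cast hp.ne_zero : (p : ℤ) ≠ 0) (by simpa using h1)).symm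

lemma residueSum_one_sub_X_pow {p : ℕ} (hp : 0 < p) {G : ℤ[X]}
    (hG : (1 - X) ^ (p - 1) = ∑ i ∈ range p, X ^ i - C (p : ℤ) * G) (a j : ℕ) (f : ℤ[X]) :
    residueSum p ((1 - X) ^ ((p - 1) * a + (j + 1)) * f) =
      (-(p : ℤ)) ^ a * residueSum p (G ^ a * (1 - X) ^ (j + 1) * f) := by
  induction a generalizing f with
  | zero => simp
  | succ a ih =>
    have : (1 - X) ^ ((p - 1) * (a + 1) + (j + 1)) * f =
        ((1 - X) ^ ((p - 1) * a + (j + 1)) * f) * ∑ i ∈ range p, X ^ i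
          + (-(p : ℤ)) • ((1 - X) ^ ((p - 1) * a + (j + 1)) * (G * f)) := by
      rw [smul_eq_C_mul, mul_add, mul_one, add_right_comm, pow_add, hG, C_neg]
      ring
    rw [this, map_add, residueSum_mul_geom_sum hp, map_smul, ih]
    have e : G ^ a * (1 - X) ^ (j + 1) * (G * f) = G ^ (a + 1) * (1 - X) ^ (j + 1) * f := by ring
    rw [e]
    simp
    ring

lemma exists_pow_eq_expand_add {p : ℕ} (hp : p.Prime) (c : ℤ[X]) :
    ∃ h : ℤ[X], c ^ p = expand ℤ p c + C (p : ℤ) * h := by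
  have := Fact.mk hp
  have hdvd : C (p : ℤ) ∣ c ^ p - expand ℤ p c := by
    rw [C_dvd_iff_map_eq_zero, Polynomial.map_sub, Polynomial.map_pow, map_expand,
      ZMod.expand_card, sub_self]
  obtain ⟨h, hh⟩ := hdvd
  exact ⟨h, by rw [← hh]; ring⟩

lemma powerMoment_expand (p K : ℕ) (f : ℤ[X]) :
    powerMoment K (expand ℤ p f) = (p : ℤ) ^ K * powerMoment K f := by
  induction f using Polynomial.induction_on' with
  | add f q hf hq => rw [map_add, map_add, map_add, hf, hq, mul_add]
  | monomial j a =>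
    rw [expand_monomial, powerMoment_monomial, powerMoment_monomial]
    push_cast
    ring

lemma powerMoment_one_sub_X_pow (K : ℕ) :
    powerMoment K ((1 - X) ^ K) = (-1) ^ K * (K.factorial : ℤ) := by
  have h := congrFun (fwdDiff_iter_eq_factorial (R := ℤ) (n := K)) 0
  rw [fwdDiff_iter_eq_sum_shift] at h
  simp only [Pi.natCast_apply, smul_eq_mul, zero_add, nsmul_eq_mul, mul_one] at h
  rw [← h, one_sub_X_pow_eq_sum_monomial, map_sum, mul_sum]
  refine Finset.sum_congr rfl fun k hk => ?_
  rw [powerMoment_monomial]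
  have e : (-1 : ℤ) ^ K * (-1) ^ (K - k) = (-1) ^ k := by
    have hk' : k ≤ K := by simpa [Nat.lt_succ_iff] using hk
    obtain ⟨d, rfl⟩ := Nat.exists_eq_add_of_le hk'
    rw [Nat.add_sub_cancel_left, pow_add, mul_assoc, ← mul_pow]
    simp
  rw [← e]
  ring

end ResidueSum

lemma pow_dvd_pow_mul_choose {p : ℕ} (hp : p.Prime) (hp3 : 3 ≤ p) {v n i : ℕ} (hv : p ^ v ∣ n)
    (hi : 2 ≤ i) : p ^ (v + 2) ∣ p ^ i * n.choose i := by
  obtain _ | k := n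
  · rw [Nat.choose_eq_zero_of_lt (by omega)]
    simp
  obtain ⟨j, rfl⟩ : ∃ j, i = j + 1 := ⟨i - 1, by omega⟩
  obtain ⟨e, u, hu, heq⟩ := Nat.exists_eq_pow_mul_and_not_dvd (Nat.succ_ne_zero j) p hp.ne_one
  have h1 : p ^ v ∣ p ^ e * (k + 1).choose (j + 1) * u := by
    have := Nat.add_one_mul_choose_eq k j
    have h2 : p ^ v ∣ (k + 1).choose (j + 1) * (j + 1) := this ▸ Dvd.dvd.mul_right hv _
    have h3 : j + 1 = p ^ e * u := heq
    rw [h3] at h2 ⊢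
    convert h2 using 1
    ring
  have h2 : p ^ v ∣ p ^ e * (k + 1).choose (j + 1) :=
    (Nat.Coprime.pow_left v ((Nat.Prime.coprime_iff_not_dvd hp).2 hu)).dvd_of_dvd_mul_right h1
  have hlow : ∀ e : ℕ, 1 ≤ e → e + 2 ≤ 3 ^ e := by
    intro e he
    induction e, he using Nat.le_induction with
    | base => norm_num
    | succ e _ ih => rw [pow_succ]; omega
  have h3 : e + 2 ≤ j + 1 := by
    obtain rfl | he := Nat.eq_zero_or_pos e
    · omega
    · have hle : p ^ e ≤ j + 1 := Nat.le_of_dvd (Nat.succ_pos j) ⟨u, heq⟩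
      have := Nat.pow_le_pow_left hp3 e
      have := hlow e he
      omega
  calc p ^ (v + 2) = p ^ 2 * p ^ v := by ring
    _ ∣ p ^ 2 * (p ^ e * (k + 1).choose (j + 1)) := mul_dvd_mul_left _ h2
    _ = p ^ (e + 2) * (k + 1).choose (j + 1) := by ring
    _ ∣ _ := mul_dvd_mul_right (pow_dvd_pow p h3) _

lemma exists_add_mul_pow_eq {R : Type*} [CommRing R] {p : ℕ} (hp : p.Prime) (hp3 : 3 ≤ p)
    {v n : ℕ} (hv : p ^ v ∣ n) (a b : R) :
    ∃ w, (a + p * b) ^ n = a ^ n + n * p * a ^ (n - 1) * b + p ^ (v + 2) * w := by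
  obtain _ | k := n
  · exact ⟨0, by simp⟩
  have hdvd : (p : R) ^ (v + 2) ∣ ∑ i ∈ range k,
      (p * b) ^ (i + 2) * a ^ (k + 1 - (i + 2)) * ((k + 1).choose (i + 2) : R) := by
    refine Finset.dvd_sum fun i _ => ?_
    have := pow_dvd_pow_mul_choose hp hp3 hv (i := i + 2) (by omega)
    have h2 : (p : R) ^ (v + 2) ∣ p ^ (i + 2) * ((k + 1).choose (i + 2) : R) := by
      simpa using (Nat.cast_dvd_cast (α := R) this)
    refine (Dvd.dvd.mul_right h2 (b ^ (i + 2) * a ^ (k + 1 - (i + 2)))).trans (dvd_of_eq ?_)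
    ring
  obtain ⟨w, hw⟩ := hdvd
  refine ⟨w, ?_⟩
  rw [← hw, add_comm a, add_pow, Finset.sum_range_succ', Finset.sum_range_succ']
  simp
  ring

/-- The ring of `p`-integral rational numbers. -/
noncomputable abbrev pIntegers (p : ℕ) [Fact p.Prime] : Subring ℚ :=
  (Rat.padicValuation p).integer

section PIntegers

variable {p : ℕ} [Fact p.Prime]

lemma inv_mem_pIntegers {m : ℤ} (hm : ¬ (p : ℤ) ∣ m) : (m : ℚ)⁻¹ ∈ pIntegers p := by
  rw [Valuation.mem_integer_iff, map_inv₀, Rat.padicValuation_cast,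
    Int.padicValuation_eq_one_iff.2 hm, inv_one]

lemma natCast_inv_mem_pIntegers {m : ℕ} (hm : 0 < m) (hmp : m < p) :
    (m : ℚ)⁻¹ ∈ pIntegers p := by
  have := inv_mem_pIntegers (p := p) (m := m)
    (fun h => absurd (Nat.le_of_dvd hm (Int.natCast_dvd_natCast.1 h)) (not_le.2 hmp))
  exact_mod_cast this

lemma factorial_inv_mem_pIntegers {m : ℕ} (hmp : m < p) :
    (m.factorial : ℚ)⁻¹ ∈ pIntegers p := by
  have := inv_mem_pIntegers (p := p) (m := m.factorial)
    (fun h => absurd (((Fact.out : p.Prime).dvd_factorial).1 (Int.natCast_dvd_natCast.1 h))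
      (not_le.2 hmp))
  exact_mod_cast this

lemma bernoulli'_mem_pIntegers (j : ℕ) (hj : j + 1 < p) : bernoulli' j ∈ pIntegers p := by
  induction j using Nat.strong_induction_on with
  | _ j ih =>
    have h := sum_bernoulli' (j + 1)
    rw [Finset.sum_range_succ, Nat.choose_succ_self_right] at h
    have e : bernoulli' j = ((j + 1 : ℕ) : ℚ)⁻¹ *
        (((j + 1 : ℕ) : ℚ) - ∑ k ∈ range j, ((j + 1).choose k : ℚ) * bernoulli' k) := by
      have : ((j + 1 : ℕ) : ℚ) ≠ 0 := by positivity
      field_simp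
      linear_combination h
    rw [e]
    refine mul_mem (natCast_inv_mem_pIntegers (by omega) hj) (sub_mem (natCast_mem _ _)
      (sum_mem fun k hk => mul_mem (natCast_mem _ _) (ih k (by simpa using hk) ?_)))
    have : k < j := by simpa using hk
    omega

open PowerSeries in
lemma coeff_of_X_mul_derivative_eq {P L : ℚ⟦X⟧} (hPL : X * d⁄dX ℚ P = C (p : ℚ) * (P * L))
    (hP : coeff 0 P ∈ pIntegers p) (hL0 : coeff 0 L = 0)
    (hL : ∀ j, j + 1 < p → coeff j L ∈ pIntegers p) (i : ℕ) (hi : i + 2 < p) :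
    ∃ z ∈ pIntegers p, ((i + 1 : ℕ) : ℚ) * coeff (i + 1) P =
      p * (coeff 0 P * coeff (i + 1) L) + p ^ 2 * z := by
  induction i using Nat.strong_induction_on with
  | _ i ih =>
    have hrec : ∀ a < i, ∃ z ∈ pIntegers p, coeff (a + 1) P = p * z := by
      intro a ha
      obtain ⟨z, hz, hza⟩ := ih a ha (by omega)
      refine ⟨((a + 1 : ℕ) : ℚ)⁻¹ * (coeff 0 P * coeff (a + 1) L + p * z),
        mul_mem (natCast_inv_mem_pIntegers (by omega) (by omega))
          (add_mem (mul_mem hP (hL _ (by omega))) (mul_mem (natCast_mem _ _) hz)), ?_⟩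
      have : ((a + 1 : ℕ) : ℚ) ≠ 0 := by positivity
      field_simp
      linear_combination hza
    have hterm : ∀ x ∈ antidiagonal i, ∃ z ∈ pIntegers p,
        coeff (x.1 + 1) P * coeff x.2 L = p * z := by
      rintro ⟨a, b⟩ hab
      rw [HasAntidiagonal.mem_antidiagonal] at hab
      obtain _ | b := b
      · exact ⟨0, zero_mem _, by simp only [hL0]; ring⟩
      · obtain ⟨z, hz, hza⟩ := hrec a (by simp at hab; omega)
        refine ⟨z * coeff (b + 1) L, mul_mem hz (hL _ (by simp at hab; omega)), ?_⟩
        simp only [hza]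
        ring
    choose! z hz hzeq using hterm
    refine ⟨∑ x ∈ antidiagonal i, z x, sum_mem hz, ?_⟩
    have h := congrArg (coeff (i + 1)) hPL
    rw [coeff_succ_X_mul, coeff_derivative, coeff_C_mul, coeff_mul,
      Finset.Nat.sum_antidiagonal_succ, Finset.sum_congr rfl hzeq, ← Finset.mul_sum] at h
    push_cast
    linear_combination h

end PIntegers

open PowerSeries in
lemma powerMoment_eq_coeff (K : ℕ) (f : Polynomial ℤ) :
    (powerMoment K f : ℚ) = K.factorial * coeff K (Polynomial.aeval (exp ℚ) f) := by
  induction f using Polynomial.induction_on' with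
  | add f q hf hq => rw [map_add, map_add, map_add, mul_add, Int.cast_add, hf, hq]
  | monomial j a =>
    have hK : (K.factorial : ℚ) ≠ 0 := by positivity
    rw [powerMoment_monomial, Polynomial.aeval_monomial, exp_pow_eq_rescale_exp,
      eq_intCast, ← zsmul_eq_mul, map_zsmul, coeff_rescale, coeff_exp]
    simp
    field_simp

open PowerSeries in
/-- The logarithmic derivative of `∑ i < g, exp (i X)` in terms of Bernoulli numbers. -/
lemma X_mul_derivative_geom_sum_exp (g : ℕ) :
    X * d⁄dX ℚ (∑ i ∈ range g, exp ℚ ^ i) = (∑ i ∈ range g, exp ℚ ^ i) *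
      (rescale (g : ℚ) (bernoulli'PowerSeries ℚ) - bernoulli'PowerSeries ℚ) := by
  set f := ∑ i ∈ range g, exp ℚ ^ i with hf
  have hgeom : f * (exp ℚ - 1) = exp ℚ ^ g - 1 := geom_sum_mul _ _
  have hB := bernoulli'PowerSeries_mul_exp_sub_one ℚ
  have hBg := congrArg (rescale (g : ℚ)) hB
  rw [map_mul, map_mul, map_sub, map_one, ← exp_pow_eq_rescale_exp, rescale_X] at hBg
  have hne : exp ℚ - 1 ≠ 0 := by
    intro h
    simpa [coeff_exp, coeff_one] using congrArg (coeff 1) h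
  have hder := congrArg (d⁄dX ℚ) hgeom
  rw [Derivation.leibniz, map_sub, map_sub, derivative_pow, derivative_exp, derivative_one,
    sub_zero, sub_zero, smul_eq_mul, smul_eq_mul, mul_assoc] at hder
  apply mul_right_cancel₀ hne
  have hg : (g : ℚ⟦X⟧) * (exp ℚ ^ (g - 1) * exp ℚ) = C (g : ℚ) * exp ℚ ^ g := by
    obtain _ | g := g
    · simp
    · rw [Nat.add_sub_cancel, ← pow_succ]
      simp
  rw [hg] at hder
  linear_combination X * hder - hBg + f * hB - rescale (g : ℚ) (bernoulli'PowerSeries ℚ) * hgeom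

open PowerSeries in
lemma powerMoment_geom_sum_pow {p : ℕ} [Fact p.Prime] (g i : ℕ) (hi : i + 2 < p) :
    ∃ z ∈ pIntegers p,
      ((i + 1 : ℕ) : ℚ) * powerMoment (i + 1) ((∑ j ∈ range g, Polynomial.X ^ j) ^ p) =
        p * (g ^ p * (bernoulli' (i + 1) * (g ^ (i + 1) - 1))) + p ^ 2 * z := by
  set f := ∑ i ∈ range g, exp ℚ ^ i with hf
  set L := rescale (g : ℚ) (bernoulli'PowerSeries ℚ) - bernoulli'PowerSeries ℚ with hL
  have hLc : ∀ j, coeff j L = (g ^ j - 1) * (bernoulli' j * (j.factorial : ℚ)⁻¹) := by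
    intro j
    rw [hL, map_sub, coeff_rescale, bernoulli'PowerSeries, coeff_mk]
    simp
    ring
  have hP0 : coeff 0 (f ^ p) = (g : ℚ) ^ p := by
    simp [hf]
  have hPL : X * d⁄dX ℚ (f ^ p) = C (p : ℚ) * (f ^ p * L) := by
    have hp0 : p ≠ 0 := (Fact.out : p.Prime).ne_zero
    have h := X_mul_derivative_geom_sum_exp g
    rw [derivative_pow, ← mul_pow_sub_one hp0 f]
    simp only [map_natCast]
    linear_combination (p : ℚ⟦X⟧) * f ^ (p - 1) * h
  obtain ⟨z, hz, h⟩ := coeff_of_X_mul_derivative_eq hPL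
    (by rw [hP0]; exact pow_mem (natCast_mem _ _) _) (by simp [hLc])
    (fun j hj => by
      rw [hLc]
      exact mul_mem (sub_mem (pow_mem (natCast_mem _ _) _) (one_mem _))
        (mul_mem (bernoulli'_mem_pIntegers j hj) (factorial_inv_mem_pIntegers (by omega)))) i hi
  refine ⟨(i + 1).factorial * z, mul_mem (natCast_mem _ _) hz, ?_⟩
  have haeval : Polynomial.aeval (exp ℚ) ((∑ j ∈ range g, (Polynomial.X : Polynomial ℤ) ^ j) ^ p)
      = f ^ p := by simp [hf]
  rw [powerMoment_eq_coeff, haeval]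
  rw [hP0, hLc] at h
  have hK : ((i + 1).factorial : ℚ) ≠ 0 := by positivity
  have h2 : ((i + 1).factorial : ℚ) * ((i + 1).factorial : ℚ)⁻¹ = 1 := mul_inv_cancel₀ hK
  linear_combination ((i + 1).factorial : ℚ) * h +
    p * g ^ p * (g ^ (i + 1) - 1) * bernoulli' (i + 1) * h2

section FleckFunctional

open Polynomial

variable {p : ℕ}

lemma exists_fleck_functional (hp : p.Prime) (N t K : ℕ) (hK : t + 1 + K = p - 1) :
    ∃ φ : ℤ[X] →ₗ[ℤ] ℤ,
      (∀ f, residueSum p ((1 - X) ^ ((p - 1) * N + (t + 1)) * f) = (-(p : ℤ)) ^ N * φ f) ∧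
      (p : ℤ) ∣ φ ((1 - X) ^ K) - 1 := by
  obtain ⟨G, hG, hG1⟩ := exists_one_sub_X_pow_eq hp
  refine ⟨residueSum p ∘ₗ LinearMap.mulLeft ℤ (G ^ N * (1 - X) ^ (t + 1)),
    fun f => residueSum_one_sub_X_pow hp.pos hG N t f, ?_⟩
  have e : G ^ N * (1 - X) ^ (t + 1) * (1 - X) ^ K =
      G ^ N * ∑ i ∈ range p, X ^ i + (-(p : ℤ)) • (G ^ N * G) := by
    rw [mul_assoc, ← pow_add, hK, hG, smul_eq_C_mul, C_neg]
    ring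
  rw [LinearMap.comp_apply, LinearMap.mulLeft_apply, e, map_add, residueSum_mul_geom_sum hp.pos,
    map_smul, eval_pow, hG1, one_pow, add_sub_cancel_left, smul_eq_mul]
  exact ⟨-residueSum p (G ^ N * G), by ring⟩

/-- Invariance of `residueSum` under `X ↦ X ^ g`, transported to the functional `φ`. -/
lemma functional_expand (hp : p.Prime) (hp3 : 3 ≤ p) {n N v g : ℕ} (hv : p ^ v ∣ n)
    (hg : p.Coprime g) {φ : ℤ[X] →ₗ[ℤ] ℤ}
    (hφ : ∀ f, residueSum p ((1 - X) ^ (p * n) * f) = (-(p : ℤ)) ^ N * φ f) {h : ℤ[X]}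
    (hh : (∑ j ∈ range g, X ^ j) ^ p = expand ℤ p (∑ j ∈ range g, X ^ j) + C (p : ℤ) * h) :
    ∃ w, ∀ f, φ f = (g : ℤ) ^ n * φ (expand ℤ g f)
      + n * p * ((g : ℤ) ^ (n - 1) * φ (h * expand ℤ g f))
      + (p : ℤ) ^ (v + 2) * φ (w * expand ℤ g f) := by
  set c : ℤ[X] := ∑ j ∈ range g, X ^ j with hc
  have hpN : (-(p : ℤ)) ^ N ≠ 0 := pow_ne_zero _ (neg_ne_zero.2 (by exact_mod_cast hp.ne_zero))
  have hc1 : c.eval 1 = g := by simp [hc, eval_finsetSum]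
  have hexp : ∀ (k : ℕ) (f : ℤ[X]), φ (expand ℤ p c ^ k * f) = (g : ℤ) ^ k * φ f := by
    intro k f
    apply mul_left_cancel₀ hpN
    rw [← hφ, mul_left_comm ((-(p : ℤ)) ^ N), ← hφ, ← map_pow, mul_comm (expand ℤ p (c ^ k)),
      ← mul_assoc,
      residueSum_mul_expand, eval_pow, hc1]
  obtain ⟨w, hw⟩ := exists_add_mul_pow_eq hp hp3 hv (expand ℤ p c) h
  refine ⟨w, fun f => ?_⟩
  have hinv : φ f = φ (c ^ (p * n) * expand ℤ g f) := by
    apply mul_left_cancel₀ hpN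
    rw [← hφ, ← hφ, ← residueSum_expand hg, map_mul, map_pow, map_sub, map_one, expand_X,
      ← mul_neg_geom_sum, mul_pow, mul_assoc]
  have hpow : c ^ (p * n) * expand ℤ g f = expand ℤ p c ^ n * expand ℤ g f
      + ((n * p : ℤ)) • (expand ℤ p c ^ (n - 1) * (h * expand ℤ g f))
      + ((p : ℤ) ^ (v + 2)) • (w * expand ℤ g f) := by
    rw [pow_mul, hh, map_natCast, hw]
    simp only [zsmul_eq_mul]
    push_cast
    ring
  rw [hinv, hpow, map_add, map_add, map_smul, map_smul, hexp, hexp]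
  simp only [smul_eq_mul]

lemma exists_pow_ne_one (hp : p.Prime) {n : ℕ} (hn : ¬ (p - 1) ∣ n) :
    ∃ g : ℕ, p.Coprime g ∧ ¬ (p : ℤ) ∣ 1 - (g : ℤ) ^ n := by
  have := Fact.mk hp
  have hnot := mt (FiniteField.forall_pow_eq_one_iff (ZMod p) n).1 (by rwa [ZMod.card])
  push Not at hnot
  obtain ⟨u, hu⟩ := hnot
  refine ⟨(u : ZMod p).val, (ZMod.val_coe_unit_coprime u).symm, fun hd => hu ?_⟩
  rw [← ZMod.intCast_zmod_eq_zero_iff_dvd] at hd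
  push_cast at hd
  rw [ZMod.natCast_zmod_val, sub_eq_zero] at hd
  ext
  rw [Units.val_pow_eq_pow_val, ← hd, Units.val_one]

lemma dvd_functional_sub_mul_powerMoment (hp : p.Prime) (hp3 : 3 ≤ p) {n N K q : ℕ}
    (hn : ¬ (p - 1) ∣ n) (hK : 0 < K) (hnK : n + K = (p - 1) * q) {φ : ℤ[X] →ₗ[ℤ] ℤ}
    (hφ : ∀ f, residueSum p ((1 - X) ^ (p * n) * f) = (-(p : ℤ)) ^ N * φ f) (f : ℤ[X]) :
    (p : ℤ) ∣ φ f - φ X * powerMoment K f := by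
  have := Fact.mk hp
  have hmod : ∀ g : ℕ, p.Coprime g → ∀ f, (φ f : ZMod p) = (g : ZMod p) ^ n * φ (expand ℤ g f) := by
    intro g hg f
    obtain ⟨h, hh⟩ := exists_pow_eq_expand_add hp (∑ j ∈ range g, X ^ j)
    obtain ⟨w, hw⟩ := functional_expand hp hp3 (v := 0) (by simp) hg hφ hh
    rw [hw f]
    simp
  have hone : (φ 1 : ZMod p) = 0 := by
    obtain ⟨g, hg, hgn⟩ := exists_pow_ne_one hp hn
    have h := hmod g hg 1
    rw [map_one (expand ℤ g)] at h
    rw [← ZMod.intCast_zmod_eq_zero_iff_dvd] at hgn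
    push_cast at hgn
    refine (mul_eq_zero.1 (?_ : (1 - (g : ZMod p) ^ n) * φ 1 = 0)).resolve_left hgn
    linear_combination h
  have hper : ∀ j : ℕ, φ (X ^ (p * j)) = φ 1 := by
    intro j
    have hpN : (-(p : ℤ)) ^ N ≠ 0 := pow_ne_zero _ (neg_ne_zero.2 (by exact_mod_cast hp.ne_zero))
    apply mul_left_cancel₀ hpN
    rw [← hφ, ← hφ, residueSum_mul_X_pow, mul_one]
  have hX : ∀ j : ℕ, (φ (X ^ j) : ZMod p) = φ X * (j : ZMod p) ^ K := by
    intro j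
    by_cases hj : p ∣ j
    · obtain ⟨i, rfl⟩ := hj
      rw [hper, hone]
      simp [hK.ne']
    · have hcop : p.Coprime j := (Nat.Prime.coprime_iff_not_dvd hp).2 hj
      have hj0 : (j : ZMod p) ≠ 0 := by rwa [Ne, ZMod.natCast_eq_zero_iff]
      have hjK : (j : ZMod p) ^ n * (j : ZMod p) ^ K = 1 := by
        rw [← pow_add, hnK, pow_mul, ZMod.pow_card_sub_one_eq_one hj0, one_pow]
      have h := hmod j hcop X
      rw [expand_X] at h
      rw [h]
      linear_combination -(φ (X ^ j) : ZMod p) * hjK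
  rw [← ZMod.intCast_zmod_eq_zero_iff_dvd]
  induction f using Polynomial.induction_on' with
  | add f q hf hq =>
    rw [map_add, map_add]
    push_cast at hf hq ⊢
    linear_combination hf + hq
  | monomial j a =>
    rw [powerMoment_monomial, ← C_mul_X_pow_eq_monomial, ← smul_eq_C_mul, map_smul]
    push_cast
    rw [smul_eq_mul]
    push_cast
    rw [hX]
    ring

lemma dvd_factorial_mul_functional_sub (hp : p.Prime) (hp3 : 3 ≤ p) {n N K q : ℕ}
    (hn : ¬ (p - 1) ∣ n) (hK : 0 < K) (hKe : Even K) (hnK : n + K = (p - 1) * q)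
    {φ : ℤ[X] →ₗ[ℤ] ℤ}
    (hφ : ∀ f, residueSum p ((1 - X) ^ (p * n) * f) = (-(p : ℤ)) ^ N * φ f)
    (hφK : (p : ℤ) ∣ φ ((1 - X) ^ K) - 1) (f : ℤ[X]) :
    (p : ℤ) ∣ K.factorial * φ f - powerMoment K f := by
  have h1 := dvd_functional_sub_mul_powerMoment hp hp3 hn hK hnK hφ ((1 - X) ^ K)
  have h2 := dvd_functional_sub_mul_powerMoment hp hp3 hn hK hnK hφ f
  rw [powerMoment_one_sub_X_pow, hKe.neg_one_pow, one_mul] at h1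
  obtain ⟨a, ha⟩ := h1
  obtain ⟨b, hb⟩ := h2
  obtain ⟨d, hd⟩ := hφK
  exact ⟨K.factorial * b + powerMoment K f * (d - a), by
    linear_combination K.factorial * hb + powerMoment K f * (hd - ha)⟩

end FleckFunctional

lemma dvd_factorial_mul_factorial_add_one {p : ℕ} (hp : p.Prime) (k t : ℕ) (hkt : k + t + 1 = p)
    (hk : Even k) : (p : ℤ) ∣ k.factorial * t.factorial + 1 := by
  have := Fact.mk hp
  have key : ∀ k t : ℕ, k + t + 1 = p →
      ((k.factorial * t.factorial : ℕ) : ZMod p) = (-1) ^ (k + 1) := by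
    intro k
    induction k with
    | zero =>
      intro t ht
      have : t = p - 1 := by omega
      subst this
      simp [ZMod.wilsons_lemma]
    | succ k ih =>
      intro t ht
      have h := ih (t + 1) (by omega)
      have hsum : ((k + 1 : ℕ) : ZMod p) + ((t + 1 : ℕ) : ZMod p) = 0 := by
        rw [← Nat.cast_add, show k + 1 + (t + 1) = p by omega, ZMod.natCast_self]
      have hne : ((t + 1 : ℕ) : ZMod p) ≠ 0 := by
        rw [Ne, ZMod.natCast_eq_zero_iff]
        exact fun hd => absurd (Nat.le_of_dvd (by omega) hd) (by omega)
      apply mul_left_cancel₀ hne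
      rw [Nat.factorial_succ] at h ⊢
      push_cast at h hsum ⊢
      rw [pow_succ]
      linear_combination ((k : ZMod p) + 1) * h + (-1) ^ (k + 1) * hsum
  have h := key k t hkt
  rw [← ZMod.intCast_zmod_eq_zero_iff_dvd]
  push_cast at h ⊢
  rw [h, pow_succ, hk.neg_one_pow]
  ring

section FleckQuotient

open Polynomial

/-- The congruence for the Fleck quotient, before `K * K!` is eliminated. -/
lemma functional_one_div_modEq {p : ℕ} [Fact p.Prime] (hp3 : 3 ≤ p) {n N K q : ℕ} (hn0 : n ≠ 0)
    (hn : ¬ (p - 1) ∣ n) (hK : 2 ≤ K) (hKp : K + 1 < p) (hKe : Even K)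
    (hnK : n + K = (p - 1) * q) {φ : ℤ[X] →ₗ[ℤ] ℤ}
    (hφ : ∀ f, residueSum p ((1 - X) ^ (p * n) * f) = (-(p : ℤ)) ^ N * φ f)
    (hφK : (p : ℤ) ∣ φ ((1 - X) ^ K) - 1) :
    ∃ z ∈ pIntegers p,
      (φ 1 : ℚ) / (p * n) * (K.factorial * K) - bernoulli' K = p * z := by
  have hp : p.Prime := Fact.out
  obtain ⟨g, hg, hgn⟩ := exists_pow_ne_one hp hn
  obtain ⟨v, m, hm, hnm⟩ := Nat.exists_eq_pow_mul_and_not_dvd hn0 p hp.ne_one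
  obtain ⟨h, hh⟩ := exists_pow_eq_expand_add hp (∑ j ∈ range g, X ^ j)
  obtain ⟨w, hw⟩ := functional_expand hp hp3 (v := v) ⟨m, hnm⟩ hg hφ hh
  have hφ1 := hw 1
  rw [map_one (expand ℤ g), mul_one, mul_one] at hφ1
  obtain ⟨a, ha⟩ := dvd_factorial_mul_functional_sub hp hp3 hn (by omega) hKe hnK hφ hφK h
  obtain ⟨i, rfl⟩ : ∃ i, K = i + 2 := ⟨K - 2, by omega⟩
  obtain ⟨z, hz, hzK⟩ := powerMoment_geom_sum_pow (p := p) g (i + 1) (by omega)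
  have hmom := congrArg (powerMoment (i + 2)) hh
  rw [map_add, powerMoment_expand, ← smul_eq_C_mul, map_smul, smul_eq_mul] at hmom
  set c := powerMoment (i + 2) (∑ j ∈ range g, X ^ j)
  set d := powerMoment (i + 2) h
  have hgp : (p : ℤ) ∣ (g : ℤ) ^ p - g := by
    rw [← ZMod.intCast_zmod_eq_zero_iff_dvd]
    simp
  obtain ⟨b, hb⟩ := hgp
  have hgK : (p : ℤ) ∣ (g : ℤ) ^ n * (g : ℤ) ^ (i + 2) - 1 := by
    rw [← ZMod.intCast_zmod_eq_zero_iff_dvd, ← pow_add, hnK, pow_mul]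
    have hg0 : (g : ZMod p) ≠ 0 := by
      rw [Ne, ZMod.natCast_eq_zero_iff]
      exact (Nat.Prime.coprime_iff_not_dvd hp).1 hg
    push_cast
    rw [ZMod.pow_card_sub_one_eq_one hg0, one_pow, sub_self]
  obtain ⟨e, he⟩ := hgK
  have hB : bernoulli' (i + 2) ∈ pIntegers p := bernoulli'_mem_pIntegers _ (by omega)
  have hp0 : (p : ℚ) ≠ 0 := by exact_mod_cast hp.ne_zero
  have hm0 : (m : ℚ) ≠ 0 := by
    rintro h0
    exact hm (by rw [Nat.cast_eq_zero.1 h0]; exact dvd_zero p)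
  have hminv : (m : ℚ)⁻¹ ∈ pIntegers p := by
    have := inv_mem_pIntegers (p := p) (m := m) (fun hd => hm (Int.natCast_dvd_natCast.1 hd))
    exact_mod_cast this
  have hginv : ((1 : ℚ) - (g : ℚ) ^ n)⁻¹ ∈ pIntegers p := by
    have := inv_mem_pIntegers hgn
    exact_mod_cast this
  have hg1 : (1 : ℚ) - (g : ℚ) ^ n ≠ 0 := by
    intro h0
    exact hgn (by rw [show (1 : ℤ) - (g : ℤ) ^ n = 0 by exact_mod_cast h0]; exact dvd_zero _)
  have hgpow : (g : ℚ) ^ n = g ^ (n - 1) * g := (pow_sub_one_mul hn0 _).symm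
  -- all relations, cast to the rationals
  have hnQ : (n : ℚ) = p ^ v * m := by exact_mod_cast hnm
  have hbQ : (g : ℚ) ^ p - g = p * b := by exact_mod_cast hb
  have heQ : (g : ℚ) ^ n * (g : ℚ) ^ (i + 2) - 1 = p * e := by exact_mod_cast he
  have haQ : ((i + 2).factorial : ℚ) * φ h - d = p * a := by exact_mod_cast ha
  have hmomQ : (powerMoment (i + 2) ((∑ j ∈ range g, X ^ j) ^ p) : ℚ) = p ^ (i + 2) * c + p * d := by
    exact_mod_cast hmom
  have hφQ : (φ 1 : ℚ) = g ^ n * φ 1 + n * p * (g ^ (n - 1) * φ h) + p ^ (v + 2) * φ w := by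
    exact_mod_cast hφ1
  have hdQ : ((i + 2 : ℕ) : ℚ) * d =
      g ^ p * (bernoulli' (i + 2) * (g ^ (i + 2) - 1)) + p * (z - (i + 2 : ℕ) * (p ^ i * c)) := by
    apply mul_left_cancel₀ hp0
    have : ((i + 1 + 1 : ℕ) : ℚ) = ((i + 2 : ℕ) : ℚ) := rfl
    rw [this] at hzK
    linear_combination hzK - ((i + 2 : ℕ) : ℚ) * hmomQ
  have hXQ : (φ 1 : ℚ) / (p * n) * (1 - g ^ n) = g ^ (n - 1) * φ h + p * ((m : ℚ)⁻¹ * φ w) := by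
    have hn0' : (n : ℚ) ≠ 0 := by exact_mod_cast hn0
    rw [div_mul_eq_mul_div, div_eq_iff (mul_ne_zero hp0 hn0')]
    have : (m : ℚ)⁻¹ * m = 1 := inv_mul_cancel₀ hm0
    have e2 : (p : ℚ) * ((m : ℚ)⁻¹ * φ w) * (p * n) = p ^ (v + 2) * φ w := by
      rw [hnQ]
      linear_combination (p : ℚ) ^ (v + 2) * φ w * this
    rw [add_mul, e2]
    linear_combination hφQ
  have hint : ∀ x : ℤ, (x : ℚ) ∈ pIntegers p := fun x => intCast_mem _ x
  have hnat : ∀ x : ℕ, (x : ℚ) ∈ pIntegers p := fun x => natCast_mem _ x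
  refine ⟨(1 - (g : ℚ) ^ n)⁻¹ * (bernoulli' (i + 2) * e
    + g ^ (n - 1) * (b * (bernoulli' (i + 2) * (g ^ (i + 2) - 1)))
    + g ^ (n - 1) * (z - (i + 2 : ℕ) * (p ^ i * c)) + g ^ (n - 1) * ((i + 2 : ℕ) * a)
    + (i + 2).factorial * (i + 2 : ℕ) * ((m : ℚ)⁻¹ * φ w)), ?_, ?_⟩
  · refine mul_mem hginv (add_mem (add_mem (add_mem (add_mem ?_ ?_) ?_) ?_) ?_)
    · exact mul_mem hB (hint _)
    · exact mul_mem (pow_mem (hnat _) _)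
        (mul_mem (hint _) (mul_mem hB (sub_mem (pow_mem (hnat _) _) (one_mem _))))
    · exact mul_mem (pow_mem (hnat _) _)
        (sub_mem hz (mul_mem (hnat _) (mul_mem (pow_mem (hnat _) _) (hint _))))
    · exact mul_mem (pow_mem (hnat _) _) (mul_mem (hnat _) (hint _))
    · exact mul_mem (mul_mem (hnat _) (hnat _)) (mul_mem hminv (hint _))
  · rw [mul_left_comm (p : ℚ), inv_mul_eq_div, eq_div_iff hg1]
    linear_combination ((i + 2).factorial * (i + 2 : ℕ) : ℚ) * hXQ
      + (g : ℚ) ^ (n - 1) * (i + 2 : ℕ) * haQ + (g : ℚ) ^ (n - 1) * hdQ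
      + (g : ℚ) ^ (n - 1) * (bernoulli' (i + 2) * (g ^ (i + 2) - 1)) * hbQ
      + bernoulli' (i + 2) * heQ
      - bernoulli' (i + 2) * (g ^ (i + 2) - 1) * hgpow

lemma functional_one_div_modEq_bernoulli {p : ℕ} [Fact p.Prime] {K t : ℕ} (ht : 0 < t)
    (hK : 2 ≤ K) (hKe : Even K) (hKt : t + K = p - 1) {x z : ℚ} (hz : z ∈ pIntegers p)
    (hx : x * (K.factorial * K) - bernoulli' K = p * z) :
    ∃ y ∈ pIntegers p, x - (t.factorial : ℚ) / (t + 1) * _root_.bernoulli K = p * y := by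
  have hp : p.Prime := Fact.out
  have hKt1 : K + t + 1 = p := by have := hp.two_le; omega
  obtain ⟨a, ha⟩ := dvd_factorial_mul_factorial_add_one hp K t hKt1 hKe
  have haQ : (K.factorial : ℚ) * t.factorial + 1 = p * a := by exact_mod_cast ha
  have hpQ : (K : ℚ) + t + 1 = p := by exact_mod_cast hKt1
  have ht1 : ((t + 1 : ℕ) : ℚ)⁻¹ ∈ pIntegers p := natCast_inv_mem_pIntegers (by omega) (by omega)
  have hK1 : (K : ℚ)⁻¹ ∈ pIntegers p := natCast_inv_mem_pIntegers (by omega) (by omega)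
  have hKf : (K.factorial : ℚ)⁻¹ ∈ pIntegers p := factorial_inv_mem_pIntegers (by omega)
  have hB : bernoulli' K ∈ pIntegers p := bernoulli'_mem_pIntegers _ (by omega)
  have hint : ∀ x : ℤ, (x : ℚ) ∈ pIntegers p := fun x => intCast_mem _ x
  have hnat : ∀ x : ℕ, (x : ℚ) ∈ pIntegers p := fun x => natCast_mem _ x
  rw [bernoulli_eq_bernoulli'_of_ne_one (by omega)]
  refine ⟨(K.factorial : ℚ)⁻¹ * (K : ℚ)⁻¹ *
    (z - ((t + 1 : ℕ) : ℚ)⁻¹ * (bernoulli' K * (a * K - 1))),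
    mul_mem (mul_mem hKf hK1) (sub_mem hz (mul_mem ht1 (mul_mem hB
      (sub_mem (mul_mem (hint _) (hnat _)) (one_mem _))))), ?_⟩
  have h1 : (K.factorial : ℚ) ≠ 0 := by positivity
  have h2 : (K : ℚ) ≠ 0 := by positivity
  have h3 : (t : ℚ) + 1 ≠ 0 := by positivity
  push_cast
  field_simp
  linear_combination ((t : ℚ) + 1) * hx - K * bernoulli' K * haQ + bernoulli' K * hpQ

lemma modCong_of_sub_eq {p : ℕ} [Fact p.Prime] {x y z : ℚ} (hz : z ∈ pIntegers p)
    (h : x - y = p * z) : modCong p 1 x y := by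
  by_cases hxy : x = y
  · exact Or.inl hxy
  · right
    have hp : p.Prime := Fact.out
    have hz0 : z ≠ 0 := by
      rintro rfl
      exact hxy (sub_eq_zero.1 (by simpa using h))
    rw [h, padicValRat.mul (by exact_mod_cast hp.ne_zero) hz0, padicValRat.self hp.one_lt]
    rw [Valuation.mem_integer_iff, Rat.padicValuation_le_one_iff] at hz
    rw [padicValRat, padicValNat.eq_zero_of_not_dvd hz]
    simp

lemma Cp_eq_residueSum (p m : ℕ) : Cp p m 0 = (residueSum p ((1 - X) ^ m) : ℚ) := by
  rw [residueSum_one_sub_X_pow_eq_sum, Cp]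
  push_cast
  refine Finset.sum_congr rfl fun k _ => ?_
  have : ((k : ℤ) - 0) % p = 0 ↔ p ∣ k := by
    rw [sub_zero, ← Int.dvd_iff_emod_eq_zero, Int.natCast_dvd_natCast]
  simp only [this]

end FleckQuotient

lemma Cp_mul_eq_sum {p : ℕ} (hp : 0 < p) (hodd : Odd p) (n : ℕ) :
    Cp p (p * n) 0 = ∑ k ∈ range (n + 1), (-1 : ℚ) ^ k * ((p * n).choose (p * k)) := by
  have hcond : ∀ k : ℕ, ((k : ℤ) - 0) % p = 0 ↔ p ∣ k := fun k => by
    rw [sub_zero, ← Int.dvd_iff_emod_eq_zero, Int.natCast_dvd_natCast]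
  rw [Cp, ← Finset.sum_filter]
  symm
  refine Finset.sum_bij (fun k _ => p * k) ?_ ?_ ?_ ?_
  · intro k hk
    have : k ≤ n := by simpa [Nat.lt_succ_iff] using hk
    simp only [mem_filter, mem_range, hcond, Nat.lt_succ_iff]
    exact ⟨Nat.mul_le_mul_left p this, dvd_mul_right p k⟩
  · intro a _ b _ hab
    exact Nat.eq_of_mul_eq_mul_left hp hab
  · intro b hb
    simp only [mem_filter, mem_range, hcond, Nat.lt_succ_iff] at hb
    obtain ⟨hb1, k, rfl⟩ := hb
    exact ⟨k, by simpa [Nat.lt_succ_iff] using Nat.le_of_mul_le_mul_left hb1 hp, rfl⟩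
  · intro k _
    rw [pow_mul, hodd.neg_one_pow]

lemma two_mul_sum_choose_eq_Cp {p n : ℕ} (hp : 0 < p) (hodd : Odd p) (hn : 0 < n)
    (heven : Even n) :
    2 * ∑ k ∈ Finset.Icc 1 n, ((p * n - 1).choose (p * k - 1) : ℚ) * (-1 : ℚ) ^ k
      = Cp p (p * n) 0 := by
  rw [Cp_mul_eq_sum hp hodd]
  set a : ℕ → ℚ := fun k => (-1 : ℚ) ^ k * ((p * n).choose (p * k)) with ha
  have hn0 : (n : ℚ) ≠ 0 := by positivity
  have hsum : n * ∑ k ∈ Finset.Icc 1 n, ((p * n - 1).choose (p * k - 1) : ℚ) * (-1 : ℚ) ^ k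
      = ∑ k ∈ range (n + 1), (k : ℚ) * a k := by
    have hIcc : Finset.Icc 1 n = Finset.Ico (0 + 1) (n + 1) := by
      ext k
      simp only [mem_Icc, mem_Ico]
      omega
    rw [Finset.range_eq_Ico, Finset.sum_eq_sum_Ico_succ_bot (Nat.succ_pos n), Nat.cast_zero,
      zero_mul, zero_add, Finset.mul_sum, hIcc]
    refine Finset.sum_congr rfl fun k hk => ?_
    have hk1 : 0 < k := (mem_Ico.1 hk).1
    have h := Nat.add_one_mul_choose_eq (p * n - 1) (p * k - 1)
    rw [Nat.sub_add_cancel (Nat.mul_pos hp hn), Nat.sub_add_cancel (Nat.mul_pos hp hk1)] at h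
    have hQ : (p : ℚ) * n * ((p * n - 1).choose (p * k - 1)) = (p * n).choose (p * k) * (p * k) := by
      exact_mod_cast h
    have hp0 : (p : ℚ) ≠ 0 := by positivity
    apply mul_left_cancel₀ hp0
    simp only [ha]
    linear_combination (-1 : ℚ) ^ k * hQ
  have hrefl : ∑ k ∈ range (n + 1), (k : ℚ) * a k = ∑ k ∈ range (n + 1), ((n : ℚ) - k) * a k := by
    rw [← Finset.sum_range_reflect]
    refine Finset.sum_congr rfl fun k hk => ?_
    have hk' : k ≤ n := by simpa [Nat.lt_succ_iff] using hk
    have e : n + 1 - 1 - k = n - k := by omega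
    simp only [ha, e]
    rw [Nat.cast_sub hk', Nat.mul_sub, Nat.choose_symm (Nat.mul_le_mul_left p hk')]
    have hs : (-1 : ℚ) ^ (n - k) = (-1) ^ k := by
      rw [← Nat.sub_add_cancel hk', Nat.even_add] at heven
      rcases Nat.even_or_odd k with h | h
      · rw [(heven.2 h).neg_one_pow, h.neg_one_pow]
      · rw [h.neg_one_pow, Odd.neg_one_pow]
        rw [← Nat.not_even_iff_odd] at h ⊢
        exact fun h' => h (heven.1 h')
    rw [hs]
  apply mul_left_cancel₀ hn0
  rw [mul_left_comm, hsum, two_mul]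
  nth_rewrite 2 [hrefl]
  rw [← Finset.sum_add_distrib, Finset.mul_sum]
  exact Finset.sum_congr rfl fun k _ => by ring

lemma fdiv_eq_of_eq {a b q r : ℤ} (h : a = b * q + r) (hr : 0 ≤ r) (hrb : r < b) :
    Int.fdiv a b = q := by
  rw [Int.fdiv_eq_ediv_of_nonneg _ (hr.trans hrb.le), h, Int.add_comm,
    Int.add_mul_ediv_left _ _ (by omega), Int.ediv_eq_zero_of_lt hr hrb, zero_add]

theorem stmt6 (p n : ℕ) (hp : p.Prime) (hodd : Odd p) (hn : 0 < n) (heven : Even n)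
    (h : ¬ (p - 1) ∣ n) :
    (2 * ∑ k ∈ Finset.Icc 1 n, ((p*n-1).choose (p*k-1) : ℚ) * (-1:ℚ)^k)
        / ((-(p:ℚ)) ^ (Int.fdiv ((n:ℤ) - 2) ((p:ℤ) - 1)) * (p:ℚ)^(n+1) * (n:ℚ))
      = Fp p (p*n) 0 / ((p:ℚ) * (n:ℚ)) ∧
    modCong p 1 (Fp p (p*n) 0 / ((p:ℚ) * (n:ℚ)))
      (((nLow p n).factorial : ℚ) / ((nLow p n : ℚ) + 1) * bernoulli (p - 1 - nLow p n)) := by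
  have := Fact.mk hp
  have hp3 : 3 ≤ p := by
    obtain ⟨k, hk⟩ := hodd
    have := hp.two_le
    omega
  have hp1 : (((p - 1 : ℕ) : ℤ)) = (p : ℤ) - 1 := by rw [Nat.cast_sub (by omega)]; simp
  -- write `n = (p - 1) * q + t` with `0 < t < p - 1`
  set q := n / (p - 1)
  obtain ⟨t, ht⟩ : ∃ t, n % (p - 1) = t + 1 :=
    ⟨n % (p - 1) - 1, by have := mt Nat.dvd_of_mod_eq_zero h; omega⟩
  have hnq : (p - 1) * q + (t + 1) = n := ht ▸ Nat.div_add_mod n (p - 1)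
  have htp : t + 1 < p - 1 := ht ▸ Nat.mod_lt n (by omega)
  have hp1e : Even (p - 1) := Nat.Odd.sub_odd hodd odd_one
  have hte : Even (t + 1) := (Nat.even_add.1 (hnq ▸ heven)).1 (hp1e.mul_right q)
  obtain ⟨K, hK⟩ : ∃ K, t + 1 + K = p - 1 := ⟨p - 1 - (t + 1), by omega⟩
  have hKe : Even K := (Nat.even_add.1 (hK ▸ hp1e)).1 hte
  have ht2 : 1 ≤ t := by
    by_contra h0
    rw [show t = 0 by omega] at hte
    exact absurd hte (by decide)
  have hK2 : 2 ≤ K := by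
    have : K ≠ 1 := by rintro rfl; exact absurd hKe (by decide)
    omega
  have hnqZ : (n : ℤ) = ((p : ℤ) - 1) * q + (t + 1) := by rw [← hp1]; exact_mod_cast hnq.symm
  have htZ : (t : ℤ) + 1 < (p : ℤ) - 1 := by rw [← hp1]; exact_mod_cast htp
  have hpn : p * n = (p - 1) * (n + q) + (t + 1) := by
    zify
    rw [hp1]
    linear_combination hnqZ
  have hlow : nLow p n = t + 1 := by
    rw [nLow, hnqZ, show ((p : ℤ) - 1) * q + (t + 1) - 1 = t + ((p : ℤ) - 1) * q by ring,
      Int.add_mul_emod_self_left, Int.emod_eq_of_lt (by omega) (by omega)]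
    omega
  have hdiv1 : Int.fdiv (((p * n : ℕ) : ℤ) - 1) ((p : ℤ) - 1) = ((n + q : ℕ) : ℤ) := by
    refine fdiv_eq_of_eq (r := t) ?_ (by omega) (by omega)
    push_cast
    linear_combination hnqZ
  have hdiv2 : Int.fdiv ((n : ℤ) - 2) ((p : ℤ) - 1) = (q : ℤ) :=
    fdiv_eq_of_eq (r := (t : ℤ) - 1) (by linear_combination hnqZ) (by omega) (by omega)
  have hp0 : (p : ℚ) ≠ 0 := by exact_mod_cast hp.ne_zero
  have hFp : Fp p (p * n) 0 = Cp p (p * n) 0 / (-(p : ℚ)) ^ (n + q) := by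
    rw [Fp, hdiv1, zpow_neg, zpow_natCast, if_neg (Nat.mul_ne_zero hp.ne_zero hn.ne'), add_zero,
      inv_mul_eq_div]
  refine ⟨?_, ?_⟩
  · rw [two_mul_sum_choose_eq_Cp hp.pos hodd hn heven, hFp, hdiv2, zpow_natCast, div_div,
      pow_add (-(p : ℚ)), heven.neg_pow]
    congr 1
    ring
  · obtain ⟨φ, hφ, hφK⟩ := exists_fleck_functional hp (n + q) t K hK
    rw [← hpn] at hφ
    obtain ⟨z, hz, hzK⟩ := functional_one_div_modEq hp3 hn.ne' h hK2 (by omega) hKe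
      (q := q + 1) (by rw [mul_add, ← hnq, mul_one, ← hK]; ring) hφ hφK
    obtain ⟨y, hy, hyK⟩ := functional_one_div_modEq_bernoulli (Nat.succ_pos t) hK2 hKe hK hz hzK
    have hFφ : Fp p (p * n) 0 = φ 1 := by
      have h1 := hφ 1
      rw [mul_one] at h1
      rw [hFp, Cp_eq_residueSum, h1]
      push_cast
      exact mul_div_cancel_left₀ _ (pow_ne_zero _ (neg_ne_zero.2 hp0))
    rw [hFφ, hlow, show p - 1 - (t + 1) = K by omega]
    exact modCong_of_sub_eq hy hyK
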